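/- Fix c ∈ 𝕋_κ and d₁, d₂ ∈ ℂ, and for each z ∈ ℂ let (u_z, u_z^[1]) be the unique solution pair of (ℓ − z)u = 0 with u_z(c) = d₁ and u_z^[1](c) = d₂. Then for every fixed x ∈ ℝ, the maps z ↦ u_z(x) and z ↦ u_z^[1](x) are entire (complex analytic on all of ℂ). -/

import Mathlib

open MeasureTheory Set Filter
open scoped ENNReal NNReal Classical

/-- Forward shift of a time scale. -/
noncomputable def tsSigma (T : Set ℝ) (t : ℝ) : ℝ :=
  if ({s | s ∈ T ∧ t < s}).Nonempty then sInf {s | s ∈ T ∧ t < s} else sSup T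

/-- Backward shift of a time scale. -/
noncomputable def tsRho (T : Set ℝ) (t : ℝ) : ℝ :=
  if ({s | s ∈ T ∧ s < t}).Nonempty then sSup {s | s ∈ T ∧ s < t} else sInf T

/-- `𝕋_κ` : the time scale with the left endpoint removed if it is finite and right-scattered. -/
noncomputable def tsKappa (T : Set ℝ) : Set ℝ :=
  if BddBelow T ∧ sInf T < tsSigma T (sInf T) then T \ {sInf T} else T

/-- Extension `p̄` of a function on `𝕋_κ` to all of `ℝ`. -/
noncomputable def extK (T : Set ℝ) (p : ℝ → ℂ) (t : ℝ) : ℂ :=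
  if t ∈ tsKappa T then p t else p (tsSigma (tsKappa T) t)

/-- Coercion of a real-valued coefficient to a complex-valued one. -/
def cR (f : ℝ → ℝ) : ℝ → ℂ := fun t => (f t : ℂ)

/-- `(u, u^[1])` is an integrated pair with density `h` against the measure `μ = dσ_κ`. -/
def IsPair (T : Set ℝ) (μ : Measure ℝ) (p : ℝ → ℂ) (u u1 h : ℝ → ℂ) : Prop :=
  ∀ c x : ℝ, c ≤ x →
    u x = u c + ∫ t in c..x, u1 t / extK T p t ∧
    u1 x = u1 c + ∫ t in Set.Ioc c x, h t ∂μ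

/-- `(u, u^[1])` is a solution pair of `(ℓ - z) u = g`. -/
def IsSLSol (T : Set ℝ) (μ : Measure ℝ) (p r q : ℝ → ℂ) (z : ℂ) (g : ℝ → ℂ)
    (u u1 : ℝ → ℂ) : Prop :=
  IsPair T μ p u u1 (fun t => (q t - z * r t) * u t - r t * g t)

/-- Wronskian of two pairs. -/
def Wr (u u1 v v1 : ℝ → ℂ) (x : ℝ) : ℂ := u x * v1 x - u1 x * v x

/-- The integrand `|u|² r` as an `ℝ≥0∞`-valued function. -/
noncomputable def sqWeight (r : ℝ → ℝ) (u : ℝ → ℂ) (t : ℝ) : ℝ≥0∞ :=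
  ((‖u t‖₊ : ℝ≥0∞)) ^ 2 * ENNReal.ofReal (r t)

/-- `u` lies in `L²` near the left endpoint `a`. -/
def L2NearLeft (T : Set ℝ) (μ : Measure ℝ) (r : ℝ → ℝ) (u : ℝ → ℂ) : Prop :=
  ∀ c ∈ tsKappa T, ∫⁻ t in {t | (∃ s ∈ T, s < t) ∧ t ≤ c} ∩ tsKappa T, sqWeight r u t ∂μ < ∞

/-- `u` lies in `L²` near the right endpoint `b`. -/
def L2NearRight (T : Set ℝ) (μ : Measure ℝ) (r : ℝ → ℝ) (u : ℝ → ℂ) : Prop :=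
  ∀ c ∈ tsKappa T, ∫⁻ t in {t | c ≤ t ∧ ∃ s ∈ T, t < s} ∩ tsKappa T, sqWeight r u t ∂μ < ∞

/-- `ℓ` is in the limit-circle case at the left endpoint. -/
def LimitCircleLeft (T : Set ℝ) (μ : Measure ℝ) (p r q : ℝ → ℝ) : Prop :=
  ∀ z : ℂ, ∀ u u1 : ℝ → ℂ, IsSLSol T μ (cR p) (cR r) (cR q) z 0 u u1 → L2NearLeft T μ r u

/-- `ℓ` is in the limit-point case at the left endpoint. -/
def LimitPointLeft (T : Set ℝ) (μ : Measure ℝ) (p r q : ℝ → ℝ) : Prop :=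
  ∀ z : ℂ, ∃ u u1 : ℝ → ℂ, IsSLSol T μ (cR p) (cR r) (cR q) z 0 u u1 ∧ ¬ L2NearLeft T μ r u

/-- `ℓ` is in the limit-circle case at the right endpoint. -/
def LimitCircleRight (T : Set ℝ) (μ : Measure ℝ) (p r q : ℝ → ℝ) : Prop :=
  ∀ z : ℂ, ∀ u u1 : ℝ → ℂ, IsSLSol T μ (cR p) (cR r) (cR q) z 0 u u1 → L2NearRight T μ r u

/-- `ℓ` is in the limit-point case at the right endpoint. -/
def LimitPointRight (T : Set ℝ) (μ : Measure ℝ) (p r q : ℝ → ℝ) : Prop :=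
  ∀ z : ℂ, ∃ u u1 : ℝ → ℂ, IsSLSol T μ (cR p) (cR r) (cR q) z 0 u u1 ∧ ¬ L2NearRight T μ r u

/-- The action `ℓ u = (-h + q u)/r` of the differential expression on a pair with density `h`. -/
noncomputable def ellApply (r q : ℝ → ℝ) (h u : ℝ → ℂ) (t : ℝ) : ℂ :=
  (-h t + (q t : ℂ) * u t) / (r t : ℂ)

/-- Membership in `L²(𝕋_κ; r dσ_κ)`. -/
def MemL2T (T : Set ℝ) (μ : Measure ℝ) (r : ℝ → ℝ) (u : ℝ → ℂ) : Prop :=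
  ∫⁻ t in tsKappa T, sqWeight r u t ∂μ < ∞

/-- The pair `(u, u^[1])` with density `h` belongs to `D_ℓ²`. -/
def MemD2 (T : Set ℝ) (μ : Measure ℝ) (p r q : ℝ → ℝ) (u u1 h : ℝ → ℂ) : Prop :=
  LocallyIntegrable h μ ∧ IsPair T μ (cR p) u u1 h ∧ MemL2T T μ r u ∧
    MemL2T T μ r (ellApply r q h u)

/-- The filter `x ↓ a`, `x ∈ 𝕋`. -/
noncomputable def leftLimFilter (T : Set ℝ) : Filter ℝ :=
  if BddBelow T then nhdsWithin (sInf T) T else Filter.atBot ⊓ Filter.principal T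

/-- The filter `x ↑ b`, `x ∈ 𝕋`. -/
noncomputable def rightLimFilter (T : Set ℝ) : Filter ℝ :=
  if BddAbove T then nhdsWithin (sSup T) T else Filter.atTop ⊓ Filter.principal T

/-- The measure `r dσ_κ` on `𝕋_κ`, giving the Hilbert space `L²(𝕋_κ; r dσ_κ)`. -/
noncomputable def wM (T : Set ℝ) (μ : Measure ℝ) (r : ℝ → ℝ) : Measure ℝ :=
  (μ.restrict (tsKappa T)).withDensity fun t => ENNReal.ofReal (r t)



lemma aux_tau (T : Set ℝ) (hcl : IsClosed T) (t s s' : ℝ) (hs : s ∈ T) (hst : s < t)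
    (hs' : s' ∈ T) (hts' : t ≤ s') (τ : ℝ → ℝ)
    (hτ : τ = fun t => if t ∈ tsKappa T then t else tsSigma (tsKappa T) t) :
    IsLeast {x | x ∈ T ∧ t ≤ x} (τ t) := by
  have hmem : ∀ x, t ≤ x → (x ∈ tsKappa T ↔ x ∈ T) := by
    intro x hx
    unfold tsKappa
    split_ifs with h
    · have h1 : sInf T ≤ s := csInf_le h.1 hs
      constructor
      · exact fun h => h.1
      · intro h2
        refine ⟨h2, ?_⟩
        simp only [mem_singleton_iff]
        linarith
    · rfl
  subst hτ
  by_cases ht : t ∈ tsKappa T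
  · simp only [ht, if_true]
    exact ⟨⟨(hmem t le_rfl).1 ht, le_rfl⟩, fun x hx => hx.2⟩
  · simp only [ht, if_false]
    have htT : t ∉ T := fun h => ht ((hmem t le_rfl).2 h)
    have e : {x | x ∈ tsKappa T ∧ t < x} = {x | x ∈ T ∧ t ≤ x} := by
      ext x
      constructor
      · rintro ⟨h1, h2⟩
        exact ⟨(hmem x h2.le).1 h1, h2.le⟩
      · rintro ⟨h1, h2⟩
        refine ⟨(hmem x h2).2 h1, lt_of_le_of_ne h2 ?_⟩
        rintro rfl
        exact htT h1
    have hne : {x | x ∈ T ∧ t ≤ x}.Nonempty := ⟨s', hs', hts'⟩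
    unfold tsSigma
    rw [e, if_pos hne]
    refine IsClosed.isLeast_csInf (hcl.inter isClosed_Ici) hne ⟨t, fun x hx => hx.2⟩

lemma aux_rho (T : Set ℝ) (hne : T.Nonempty) (hcl : IsClosed T) (c : ℝ) : tsRho T c ∈ T := by
  unfold tsRho
  split_ifs with h
  · have hb : BddAbove {s | s ∈ T ∧ s < c} := ⟨c, fun x hx => hx.2.le⟩
    exact hcl.closure_subset_iff.2 (fun x hx => hx.1) (csSup_mem_closure h hb)
  · have hb : BddBelow T := by
      refine ⟨c, fun x hx => ?_⟩
      by_contra h'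
      exact h ⟨x, hx, not_le.1 h'⟩
    exact hcl.csInf_mem hne hb

lemma aux_rho_mono (T : Set ℝ) (c s : ℝ) (hs : s ∈ T) (hsc : s < c) :
    s ≤ tsRho T c := by
  unfold tsRho
  rw [if_pos ⟨s, hs, hsc⟩]
  exact le_csSup ⟨c, fun x hx => hx.2.le⟩ ⟨hs, hsc⟩

lemma aux_rho_lt (T : Set ℝ) (c t s0 : ℝ) (hs0 : s0 ∈ T) (h0 : s0 < t)
    (h : t < tsRho T c) :
    ∃ s ∈ T, s < c ∧ t < s := by
  unfold tsRho at h
  split_ifs at h with hn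
  · obtain ⟨s, hs, h1⟩ := exists_lt_of_lt_csSup hn h
    exact ⟨s, hs.1, hs.2, h1⟩
  · have hb : BddBelow T := by
      refine ⟨c, fun x hx => ?_⟩
      by_contra h'
      exact hn ⟨x, hx, not_le.1 h'⟩
    have := csInf_le hb hs0
    linarith

lemma aux_lf (ν : Measure ℝ) (h : ∀ c d : ℝ, c ≤ d → ν (Set.Ico c d) < ∞) :
    IsLocallyFiniteMeasure ν := by
  refine ⟨fun x => ⟨Ico (x-1) (x+1), Ico_mem_nhds (by linarith) (by linarith), h _ _ (by linarith)⟩⟩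

lemma aux_lf' (ν : Measure ℝ) (h : ∀ c d : ℝ, c ≤ d → ν (Set.Ioc c d) < ∞) :
    IsLocallyFiniteMeasure ν := by
  refine ⟨fun x => ⟨Ioc (x-1) (x+1), Ioc_mem_nhds (by linarith) (by linarith), h _ _ (by linarith)⟩⟩

lemma aux_pbar (T : Set ℝ) (hne : T.Nonempty) (hcl : IsClosed T) (ν : Measure ℝ)
    (hν : ∀ c d : ℝ, c ≤ d → ν (Set.Ico c d) = ENNReal.ofReal (tsRho T d - tsRho T c))
    (p : ℝ → ℂ) (hp : LocallyIntegrable (fun t => 1 / p t) ν) :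
    LocallyIntegrable (fun t => 1 / extK T p t) volume := by
  have := aux_lf ν (fun c d h => by rw [hν c d h]; exact ENNReal.ofReal_lt_top)
  set τ : ℝ → ℝ := fun t => if t ∈ tsKappa T then t else tsSigma (tsKappa T) t with hτ
  have hext : ∀ t, extK T p t = p (τ t) := by
    intro t
    simp only [extK, hτ]
    split_ifs <;> rfl
  set J : Set ℝ := {t | (∃ s ∈ T, s < t) ∧ ∃ s ∈ T, t ≤ s} with hJ
  have hJτ : ∀ t ∈ J, IsLeast {x | x ∈ T ∧ t ≤ x} (τ t) := by
    rintro t ⟨⟨s, hs, h1⟩, s', hs', h2⟩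
    exact aux_tau T hcl t s s' hs h1 hs' h2 τ hτ
  have hJm : MeasurableSet J := by
    apply Set.OrdConnected.measurableSet
    refine ⟨?_⟩
    rintro x ⟨⟨s, hs, h1⟩, _⟩ y ⟨_, s', hs', h2⟩ w ⟨hw1, hw2⟩
    exact ⟨⟨s, hs, by linarith⟩, s', hs', by linarith⟩
  have hτm : AEMeasurable τ (volume.restrict J) := by
    apply aemeasurable_restrict_of_monotoneOn hJm
    intro x hx y hy hxy
    exact (hJτ x hx).2 ⟨(hJτ y hy).1.1, hxy.trans (hJτ y hy).1.2⟩
  have hmap : Measure.map τ (volume.restrict J) = ν := by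
    symm
    apply Measure.ext_of_Ico
    intro c d hcd
    rw [hν c d hcd.le, Measure.map_apply_of_aemeasurable hτm measurableSet_Ico,
      Measure.restrict_apply₀' hJm.nullMeasurableSet, ← Real.volume_Ioc]
    apply measure_congr
    have h1 : ∀ᵐ t : ℝ, t ≠ tsRho T c := by simp [ae_iff, measure_singleton]
    have h2 : ∀ᵐ t : ℝ, t ≠ tsRho T d := by simp [ae_iff, measure_singleton]
    have key : ∀ e, ∀ t ∈ J, t ≠ tsRho T e → (e ≤ τ t ↔ tsRho T e < t) := by
      intro e t ht hte
      constructor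
      · intro h
        by_contra h'
        have h3 : t < tsRho T e := lt_of_le_of_ne (not_lt.1 h') hte
        obtain ⟨s0, hs0, h0⟩ := ht.1
        obtain ⟨s, hs, h4, h5⟩ := aux_rho_lt T e t s0 hs0 h0 h3
        have := (hJτ t ht).2 ⟨hs, h5.le⟩
        linarith
      · intro h
        by_contra h'
        have := aux_rho_mono T e (τ t) (hJτ t ht).1.1 (not_le.1 h')
        have := (hJτ t ht).1.2
        linarith
    filter_upwards [h1, h2] with t h1 h2
    apply propext
    change (tsRho T c < t ∧ t ≤ tsRho T d) ↔ ((c ≤ τ t ∧ τ t < d) ∧ t ∈ J)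
    constructor
    · rintro ⟨h3, h4⟩
      have hJt : t ∈ J := ⟨⟨_, aux_rho T hne hcl c, h3⟩, _, aux_rho T hne hcl d, h4⟩
      refine ⟨⟨(key c t hJt h1).2 h3, ?_⟩, hJt⟩
      by_contra h5
      have := (key d t hJt h2).1 (not_lt.1 h5)
      linarith
    · rintro ⟨⟨h3, h4⟩, hJt⟩
      refine ⟨(key c t hJt h1).1 h3, ?_⟩
      by_contra h5
      have := (key d t hJt h2).2 (not_le.1 h5)
      linarith
  rw [locallyIntegrable_iff]
  intro k hk
  obtain ⟨B, hB⟩ := hk.bddAbove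
  obtain ⟨A, hA⟩ := hk.bddBelow
  have hkAB : k ⊆ Icc A B := fun x hx => ⟨hA hx, hB hx⟩
  refine IntegrableOn.mono_set ?_ hkAB
  have I1 : IntegrableOn (fun t => 1 / extK T p t) (Icc A B ∩ J) := by
    obtain ⟨B', hB'⟩ : ∃ B', ∀ t ∈ J, t ≤ B → τ t ≤ B' := by
      by_cases h : ∃ s ∈ T, B ≤ s
      · obtain ⟨s, hs, h⟩ := h
        exact ⟨s, fun t ht htB => (hJτ t ht).2 ⟨hs, by linarith⟩⟩
      · refine ⟨B, fun t ht htB => ?_⟩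
        by_contra h'
        exact h ⟨τ t, (hJτ t ht).1.1, (not_le.1 h').le⟩
    have h1 : IntegrableOn (fun t => 1 / p t) (Icc A B') ν :=
      hp.integrableOn_isCompact isCompact_Icc
    rw [← hmap] at h1
    rw [IntegrableOn, Measure.restrict_map_of_aemeasurable hτm measurableSet_Icc] at h1
    have h2 := h1.comp_aemeasurable (hτm.mono_measure Measure.restrict_le_self)
    have h3 : IntegrableOn (fun t => 1 / extK T p t) (τ ⁻¹' Icc A B') (volume.restrict J) := by
      simpa [IntegrableOn, Function.comp_def, hext] using h2
    have h4 : IntegrableOn (fun t => 1 / extK T p t) (Icc A B) (volume.restrict J) := by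
      refine h3.mono_set_ae ?_
      filter_upwards [ae_restrict_mem hJm] with t ht htAB
      exact ⟨htAB.1.trans (hJτ t ht).1.2, hB' t ht htAB.2⟩
    rwa [IntegrableOn, Measure.restrict_restrict measurableSet_Icc] at h4
  have hconst : ∀ (s : Set ℝ) (C : ℂ), MeasurableSet s → (∀ t ∈ s, extK T p t = C) →
      IntegrableOn (fun t => 1 / extK T p t) (Icc A B ∩ s) := by
    intro s C hs h
    have h1 : IntegrableOn (fun _ : ℝ => 1 / C) (Icc A B ∩ s) := by
      apply IntegrableOn.mono_set _ inter_subset_left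
      exact continuous_const.continuousOn.integrableOn_compact isCompact_Icc
    refine h1.congr_fun (fun t ht => ?_) (measurableSet_Icc.inter hs)
    simp only [h t ht.2]
  have hκ : tsKappa T ⊆ T := by
    unfold tsKappa
    split_ifs
    · exact sdiff_subset
    · rfl
  have I2 := hconst {t | ∀ s ∈ T, s < t} (p (sSup (tsKappa T))) (by
      apply Set.OrdConnected.measurableSet
      exact ⟨fun x hx y hy w hw s hs => lt_of_lt_of_le (hx s hs) hw.1⟩) (by
      intro t ht
      have h1 : t ∉ tsKappa T := fun h => lt_irrefl _ (ht t (hκ h))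
      have h2 : ¬ {s | s ∈ tsKappa T ∧ t < s}.Nonempty := by
        rintro ⟨s, hs, h⟩
        exact lt_asymm h (ht s (hκ hs))
      rw [extK, if_neg h1, tsSigma, if_neg h2])
  have I3 := hconst {t | ∀ s ∈ T, t < s} (p (if (tsKappa T).Nonempty then sInf (tsKappa T) else sSup (tsKappa T))) (by
      apply Set.OrdConnected.measurableSet
      exact ⟨fun x hx y hy w hw s hs => lt_of_le_of_lt hw.2 (hy s hs)⟩) (by
      intro t ht
      have h1 : t ∉ tsKappa T := fun h => lt_irrefl _ (ht t (hκ h))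
      have h2 : {s | s ∈ tsKappa T ∧ t < s} = tsKappa T := by
        ext s
        exact ⟨fun h => h.1, fun h => ⟨h, ht s (hκ h)⟩⟩
      rw [extK, if_neg h1, tsSigma, h2])
  have I4 : IntegrableOn (fun t => 1 / extK T p t) {sInf T} :=
    integrableOn_singleton (by simp) (by simp)
  refine (((I1.union I2).union I3).union I4).mono_set ?_
  intro t ht
  by_cases h1 : ∃ s ∈ T, s < t
  · by_cases h2 : ∃ s ∈ T, t ≤ s
    · exact Or.inl (Or.inl (Or.inl ⟨ht, h1, h2⟩))
    · push Not at h2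
      exact Or.inl (Or.inl (Or.inr ⟨ht, h2⟩))
  · push Not at h1
    by_cases h3 : t ∈ T
    · right
      have : IsLeast T t := ⟨h3, h1⟩
      exact this.csInf_eq.symm
    · refine Or.inl (Or.inr ⟨ht, fun s hs => lt_of_le_of_ne (h1 s hs) ?_⟩)
      rintro rfl
      exact h3 hs

lemma aux_sup (I : Set ℝ) (f : ℝ → ℝ) (hf : ∀ x, 0 ≤ f x) (a : ℝ)
    (hb : ∃ K, ∀ x ∈ I, f x ≤ K)
    (h : ∀ K, 0 ≤ K → (∀ x ∈ I, f x ≤ K) → ∀ x ∈ I, f x ≤ a + K / 2) :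
    ∀ x ∈ I, f x ≤ 2 * a := by
  intro x hx
  obtain ⟨K0, hK0⟩ := hb
  have hbdd : BddAbove (f '' I) := ⟨K0, by rintro _ ⟨y, hy, rfl⟩; exact hK0 y hy⟩
  have hle : ∀ y ∈ I, f y ≤ sSup (f '' I) := fun y hy => le_csSup hbdd ⟨y, hy, rfl⟩
  have h1 := h (sSup (f '' I)) ((hf x).trans (hle x hx)) hle
  have h2 : sSup (f '' I) ≤ a + sSup (f '' I) / 2 := by
    apply csSup_le ((show I.Nonempty from ⟨x, hx⟩).image f)
    rintro _ ⟨y, hy, rfl⟩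
    exact h1 y hy
  linarith [hle x hx]

lemma aux_diff (f : ℂ → ℂ) (z0 : ℂ) (L ρ : ℝ) (hL : 0 ≤ L) (hρ : 0 < ρ)
    (h : ∀ z1 z2, z1 ≠ z0 → z2 ≠ z0 → ‖z1 - z0‖ < ρ → ‖z2 - z0‖ < ρ →
      ‖(z1 - z0)⁻¹ * (f z1 - f z0) - (z2 - z0)⁻¹ * (f z2 - f z0)‖ ≤
        L * (‖z1 - z0‖ + ‖z2 - z0‖)) : DifferentiableAt ℂ f z0 := by
  have hc : Cauchy (Filter.map (slope f z0) (nhdsWithin z0 {z0}ᶜ)) := by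
    rw [Metric.cauchy_iff]
    refine ⟨inferInstance, fun η hη => ?_⟩
    set δ := min ρ (η / (2 * L + 1)) with hδ
    have hδ0 : 0 < δ := lt_min hρ (by positivity)
    refine ⟨slope f z0 '' (Metric.ball z0 δ ∩ {z0}ᶜ), image_mem_map ?_, ?_⟩
    · rw [inter_comm]
      exact inter_mem self_mem_nhdsWithin (mem_nhdsWithin_of_mem_nhds (Metric.ball_mem_nhds _ hδ0))
    · rintro _ ⟨z1, ⟨h1, h1'⟩, rfl⟩ _ ⟨z2, ⟨h2, h2'⟩, rfl⟩
      rw [Metric.mem_ball, dist_eq_norm] at h1 h2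
      have h3 := h z1 z2 h1' h2' (h1.trans_le (min_le_left _ _)) (h2.trans_le (min_le_left _ _))
      rw [dist_eq_norm, slope, slope]
      simp only [vsub_eq_sub, smul_eq_mul]
      refine h3.trans_lt ?_
      have h4 : δ * (2 * L + 1) ≤ η := by
        rw [← le_div_iff₀ (by positivity)]; exact min_le_right _ _
      nlinarith
  obtain ⟨y, hy⟩ := cauchy_map_iff_exists_tendsto.1 hc
  exact (hasDerivAt_iff_tendsto_slope.2 hy).differentiableAt

lemma aux_meas (μ : Measure ℝ) [IsLocallyFiniteMeasure μ] (h : ℝ → ℂ)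
    (hh : LocallyIntegrable h μ) (A : ℝ) :
    StronglyMeasurable (fun x => ∫ t in Ioc A x, h t ∂μ) := by
  obtain ⟨h', hm, hae⟩ := hh.aestronglyMeasurable
  have e : (fun x => ∫ t in Ioc A x, h t ∂μ) =
      fun x => ∫ t, ({y : ℝ × ℝ | A < y.2 ∧ y.2 ≤ y.1}.indicator (fun y => h' y.2)) (x, t) ∂μ := by
    ext x
    rw [← integral_indicator measurableSet_Ioc]
    apply integral_congr_ae
    filter_upwards [hae] with t ht
    by_cases hx : A < t ∧ t ≤ x
    · rw [indicator_of_mem (show t ∈ Ioc A x from hx), indicator_of_mem (by exact hx), ht]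
    · rw [indicator_of_notMem (show t ∉ Ioc A x from hx), indicator_of_notMem (by exact hx)]
  rw [e]
  apply StronglyMeasurable.integral_prod_right'
  apply (hm.comp_measurable measurable_snd).indicator
  exact (measurableSet_lt measurable_const measurable_snd).inter
    (measurableSet_le measurable_snd measurable_fst)

lemma aux_ii (f : ℝ → ℂ) (h : LocallyIntegrable f volume) (A B : ℝ) :
    IntervalIntegrable f volume A B :=
  (h.integrableOn_isCompact isCompact_uIcc).intervalIntegrable

lemma aux_reg (T : Set ℝ) (μ : Measure ℝ) [IsLocallyFiniteMeasure μ] (p r q : ℝ → ℂ)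
    (hφ : LocallyIntegrable (fun t => 1 / extK T p t) volume)
    (hr : LocallyIntegrable r μ) (hq : LocallyIntegrable q μ) (z : ℂ) (u u1 : ℝ → ℂ)
    (hs : IsSLSol T μ p r q z 0 u u1) :
    (∀ A B, IntervalIntegrable (fun t => u1 t / extK T p t) volume A B) ∧
    LocallyIntegrable (fun t => (q t - z * r t) * u t) μ ∧
    (∀ A B, ∃ K, ∀ x ∈ Icc A B, ‖u x‖ ≤ K ∧ ‖u1 x‖ ≤ K) := by
  have hs' : ∀ c x : ℝ, c ≤ x →
    u x = u c + ∫ t in c..x, u1 t / extK T p t ∧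
    u1 x = u1 c + ∫ t in Set.Ioc c x, (q t - z * r t) * u t ∂μ := by
    simpa [IsSLSol, IsPair] using hs
  have hφi : ∀ A B, IntervalIntegrable (fun t => 1 / extK T p t) volume A B :=
    fun A B => aux_ii _ hφ A B
  have hqz : LocallyIntegrable (fun t => q t - z * r t) μ := hq.sub (hr.smul z)
  have hh : LocallyIntegrable (fun t => (q t - z * r t) * u t) μ := by
    by_contra hn
    rw [LocallyIntegrable] at hn
    push Not at hn
    obtain ⟨t0, ht0⟩ := hn
    have hni : ∀ c y, c < t0 → t0 < y →
        ¬ IntegrableOn (fun t => (q t - z * r t) * u t) (Ioc c y) μ :=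
      fun c y h1 h2 h => ht0 ⟨Ioc c y, Ioc_mem_nhds h1 h2, h⟩
    have hcy : ∀ c y, c < t0 → t0 < y → u1 y = u1 c := by
      intro c y h1 h2
      rw [(hs' c y (by linarith)).2, integral_undef (hni c y h1 h2), add_zero]
    have h0 : u1 t0 = u1 (t0 - 1) := by
      by_cases hi : IntegrableOn (fun t => (q t - z * r t) * u t) (Ioc (t0 - 1) t0) μ
      · have h2 : ¬ IntegrableOn (fun t => (q t - z * r t) * u t) (Ioc t0 (t0 + 1)) μ := by
          intro h2
          apply hni (t0 - 1) (t0 + 1) (by linarith) (by linarith)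
          rw [← Ioc_union_Ioc_eq_Ioc (show t0 - 1 ≤ t0 by linarith) (show t0 ≤ t0 + 1 by linarith)]
          exact hi.union h2
        rw [← hcy (t0 - 1) (t0 + 1) (by linarith) (by linarith),
          (hs' t0 (t0 + 1) (by linarith)).2, integral_undef h2, add_zero]
      · rw [(hs' (t0 - 1) t0 (by linarith)).2, integral_undef hi, add_zero]
    have hK : ∀ x, u1 x = u1 t0 := by
      intro x
      rcases lt_trichotomy x t0 with h | h | h
      · rw [← hcy x (t0 + 1) h (by linarith), hcy (t0 - 1) (t0 + 1) (by linarith) (by linarith), h0]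
      · rw [h]
      · rw [hcy (t0 - 1) x (by linarith) h, h0]
    have hu : ∀ x, u x = u 0 + u1 t0 * ∫ t in (0:ℝ)..x, 1 / extK T p t := by
      intro x
      have e : ∀ c x, (∫ t in c..x, u1 t / extK T p t) =
          u1 t0 * ∫ t in c..x, 1 / extK T p t := by
        intro c x
        rw [← intervalIntegral.integral_const_mul]
        congr 1
        ext t
        rw [hK t]; ring
      rcases le_total 0 x with h | h
      · rw [(hs' 0 x h).1, e]
      · have h1 := (hs' x 0 h).1
        rw [e, intervalIntegral.integral_symm] at h1
        rw [h1]; ring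
    have hcont : Continuous u := by
      have : u = fun x => u 0 + u1 t0 * ∫ t in (0:ℝ)..x, 1 / extK T p t := funext hu
      rw [this]
      have := intervalIntegral.continuous_primitive hφi 0
      fun_prop
    exact ht0 (hqz.mul_continuous hcont t0)
  have hu1b : ∀ A B, ∃ K, ∀ x ∈ Icc A B, ‖u1 x‖ ≤ K := by
    intro A B
    have hi : IntegrableOn (fun t => (q t - z * r t) * u t) (Ioc A B) μ :=
      (hh.integrableOn_isCompact isCompact_Icc).mono_set Ioc_subset_Icc_self
    refine ⟨‖u1 A‖ + ∫ t in Ioc A B, ‖(q t - z * r t) * u t‖ ∂μ, fun x hx => ?_⟩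
    rw [(hs' A x hx.1).2]
    refine (norm_add_le _ _).trans ?_
    gcongr
    refine (norm_integral_le_integral_norm _).trans ?_
    apply setIntegral_mono_set hi.norm
    · exact Eventually.of_forall fun t => norm_nonneg _
    · exact (Ioc_subset_Ioc_right hx.2).eventuallyLE
  have hi : ∀ A B, A ≤ B → IntegrableOn (fun t => u1 t / extK T p t) (Ioc A B) := by
    intro A B hAB
    obtain ⟨K, hK⟩ := hu1b A B
    have h1 : IntegrableOn (fun t => 1 / extK T p t) (Ioc A B) := (hφi A B).1
    have h2 : AEStronglyMeasurable u1 (volume.restrict (Ioc A B)) := by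
      have h3 := (stronglyMeasurable_const (b := u1 A)).add (aux_meas μ _ hh A)
      refine h3.aestronglyMeasurable.congr ?_
      filter_upwards [ae_restrict_mem measurableSet_Ioc] with x hx
      exact ((hs' A x hx.1.le).2).symm
    have h4 := Integrable.bdd_mul (c := K) h1 h2 (by
      filter_upwards [ae_restrict_mem measurableSet_Ioc] with x hx
      exact hK x ⟨hx.1.le, hx.2⟩)
    refine h4.congr (Eventually.of_forall fun t => ?_)
    simp only
    ring
  refine ⟨?_, hh, ?_⟩
  · intro A B
    rcases le_total A B with h | h
    · exact (intervalIntegrable_iff_integrableOn_Ioc_of_le h).2 (hi A B h)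
    · exact ((intervalIntegrable_iff_integrableOn_Ioc_of_le h).2 (hi B A h)).symm
  · intro A B
    obtain ⟨K, hK⟩ := hu1b A B
    by_cases hAB : A ≤ B
    swap
    · exact ⟨0, fun x hx => absurd (hx.1.trans hx.2) hAB⟩
    refine ⟨max K (‖u A‖ + ∫ t in Ioc A B, ‖u1 t / extK T p t‖), fun x hx =>
      ⟨le_max_of_le_right ?_, le_max_of_le_left (hK x hx)⟩⟩
    rw [(hs' A x hx.1).1, intervalIntegral.integral_of_le hx.1]
    refine (norm_add_le _ _).trans ?_
    gcongr
    refine (norm_integral_le_integral_norm _).trans ?_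
    apply setIntegral_mono_set (hi A B hAB).norm
    · exact Eventually.of_forall fun t => norm_nonneg _
    · exact (Ioc_subset_Ioc_right hx.2).eventuallyLE

lemma aux_stab (T : Set ℝ) (μ : Measure ℝ) [IsLocallyFiniteMeasure μ] (p r q : ℝ → ℂ)
    (hφ : LocallyIntegrable (fun t => 1 / extK T p t) volume)
    (hr : LocallyIntegrable r μ) (hq : LocallyIntegrable q μ) (z : ℂ)
    (A B c : ℝ) (hc : c ∈ Icc A B) :
    ∃ C, 0 ≤ C ∧ ∀ (w w1 g : ℝ → ℂ), IsSLSol T μ p r q z g w w1 →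
      (∃ K, ∀ x ∈ Icc A B, ‖w x‖ ≤ K) → w c = 0 → w1 c = 0 →
      ∀ G, 0 ≤ G → (∀ x ∈ Icc A B, ‖g x‖ ≤ G) →
      ∀ x ∈ Icc A B, ‖w x‖ ≤ C * G ∧ ‖w1 x‖ ≤ C * G := by
  have hφi : ∀ A B, IntervalIntegrable (fun t => ‖1 / extK T p t‖) volume A B :=
    fun A B => (aux_ii _ hφ A B).norm
  have hri : IntegrableOn (fun t => ‖r t‖) (Ioc A B) μ :=
    ((hr.integrableOn_isCompact isCompact_Icc).mono_set Ioc_subset_Icc_self).norm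
  have hqi : IntegrableOn (fun t => ‖q t‖) (Ioc A B) μ :=
    ((hq.integrableOn_isCompact isCompact_Icc).mono_set Ioc_subset_Icc_self).norm
  set m : ℝ → ℝ := fun t => ‖q t‖ + ‖z‖ * ‖r t‖ with hm
  have hmi : IntegrableOn m (Ioc A B) μ := hqi.add (hri.const_mul _)
  set Q := ∫ t in Ioc A B, m t ∂μ with hQ
  set N := ∫ t in Ioc A B, ‖r t‖ ∂μ with hN
  have hQ0 : 0 ≤ Q := integral_nonneg fun t => by positivity
  have hN0 : 0 ≤ N := integral_nonneg fun t => by positivity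
  set ε : ℝ := 1 / (2 * (Q + 1)) with hε
  have hε0 : 0 < ε := by positivity
  have hεQ : ε * Q ≤ 1 / 2 := by
    rw [hε, div_mul_eq_mul_div, div_le_div_iff₀ (by positivity) (by norm_num)]
    linarith
  -- uniform continuity
  have hP := intervalIntegral.continuous_primitive hφi 0
  obtain ⟨δ, hδ0, hδ⟩ := Metric.uniformContinuousOn_iff_le.1
    ((isCompact_Icc (a := A) (b := B)).uniformContinuousOn_of_continuous hP.continuousOn) ε hε0
  have hsmall : ∀ s ∈ Icc A B, ∀ t ∈ Icc A B, s ≤ t → t - s ≤ δ →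
      ∫ x in s..t, ‖1 / extK T p x‖ ≤ ε := by
    intro s hs t ht hst hd
    have h1 := hδ t ht s hs (by rw [Real.dist_eq, abs_of_nonneg] <;> linarith)
    rw [Real.dist_eq, intervalIntegral.integral_interval_sub_left (hφi _ _) (hφi _ _)] at h1
    exact (le_abs_self _).trans h1
  have hind : ∀ n : ℕ, ∃ C, 0 ≤ C ∧ ∀ (w w1 g : ℝ → ℂ), IsSLSol T μ p r q z g w w1 →
      (∃ K, ∀ x ∈ Icc A B, ‖w x‖ ≤ K) → w c = 0 → w1 c = 0 →
      ∀ G, 0 ≤ G → (∀ x ∈ Icc A B, ‖g x‖ ≤ G) →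
      ∀ x ∈ Icc A B, |x - c| ≤ n * δ → ‖w x‖ ≤ C * G ∧ ‖w1 x‖ ≤ C * G := by
    intro n
    induction n with
    | zero =>
      refine ⟨0, le_rfl, ?_⟩
      intro w w1 g _ _ hw hw1 G _ _ x _ hx
      have : x = c := by
        simp only [Nat.cast_zero, zero_mul] at hx
        exact sub_eq_zero.1 (abs_eq_zero.1 (le_antisymm hx (abs_nonneg _)))
      subst this
      simp [hw, hw1]
    | succ n ih =>
      obtain ⟨C, hC0, hC⟩ := ih
      set a : ℝ := C + ε * (C + N) with ha
      refine ⟨2 * a + (C + Q * (2 * a) + N), by positivity, ?_⟩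
      intro w w1 g hsol hb hw hw1 G hG hg x hx hxn
      -- the base point
      obtain ⟨y, hy, hyn, hxy⟩ : ∃ y ∈ Icc A B, |y - c| ≤ n * δ ∧ |x - y| ≤ δ := by
        have hn1 : (0:ℝ) < (n:ℝ) + 1 := by positivity
        set l : ℝ := n / ((n:ℝ) + 1) with hl
        have hl0 : 0 ≤ l := by positivity
        have hl1 : l ≤ 1 := by rw [hl, div_le_one hn1]; linarith
        have hl2 : l * ((n:ℝ) + 1) = n := by rw [hl]; field_simp
        push_cast at hxn
        refine ⟨c + l * (x - c), ⟨?_, ?_⟩, ?_, ?_⟩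
        · nlinarith [hc.1, hx.1]
        · nlinarith [hc.2, hx.2]
        · rw [add_sub_cancel_left, abs_mul, abs_of_nonneg hl0]
          nlinarith
        · have : x - (c + l * (x - c)) = (1 - l) * (x - c) := by ring
          rw [this, abs_mul, abs_of_nonneg (by linarith)]
          nlinarith
      obtain ⟨hyw, hyw1⟩ := hC w w1 g hsol hb hw hw1 G hG hg y hy hyn
      set I : Set ℝ := Icc A B ∩ {t | |t - y| ≤ δ} with hI
      have hIc : ∀ s ∈ I, ∀ t ∈ I, ∀ v ∈ Icc s t, v ∈ I := by
        rintro s ⟨hs1, hs2⟩ t ⟨ht1, ht2⟩ v hv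
        simp only [mem_ofPred_eq, abs_le] at hs2 ht2
        refine ⟨⟨hs1.1.trans hv.1, hv.2.trans ht1.2⟩, ?_⟩
        simp only [mem_ofPred_eq, abs_le]
        constructor <;> linarith [hv.1, hv.2]
      have hyI : y ∈ I := ⟨hy, by simp [hδ0.le]⟩
      have hxI : x ∈ I := ⟨hx, hxy⟩
      have E1 : ∀ K1, 0 ≤ K1 → (∀ t ∈ I, ‖w1 t‖ ≤ K1) → ∀ s ∈ I, ∀ t ∈ I, s ≤ t → t - s ≤ δ →
          ‖w t - w s‖ ≤ ε * K1 := by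
        intro K1 hK1 hb1 s hs t ht hst hd
        rw [(hsol s t hst).1, add_sub_cancel_left]
        have h1 : ‖∫ x in s..t, w1 x / extK T p x‖ ≤ ∫ x in s..t, K1 * ‖1 / extK T p x‖ := by
          apply intervalIntegral.norm_integral_le_of_norm_le hst _ ((hφi _ _).const_mul _)
          refine Eventually.of_forall fun v hv => ?_
          rw [div_eq_mul_one_div, norm_mul]
          gcongr
          exact hb1 v (hIc s hs t ht v ⟨hv.1.le, hv.2⟩)
        rw [intervalIntegral.integral_const_mul] at h1
        have := hsmall s hs.1 t ht.1 hst hd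
        nlinarith
      have E2 : ∀ K, 0 ≤ K → (∀ t ∈ I, ‖w t‖ ≤ K) → ∀ s ∈ I, ∀ t ∈ I, s ≤ t →
          ‖w1 t - w1 s‖ ≤ Q * K + N * G := by
        intro K hK hb1 s hs t ht hst
        rw [(hsol s t hst).2, add_sub_cancel_left]
        have hsub : Ioc s t ⊆ Ioc A B := Ioc_subset_Ioc hs.1.1 ht.1.2
        have hint : IntegrableOn (fun v => m v * K + ‖r v‖ * G) (Ioc A B) μ :=
          (hmi.mul_const K).add (hri.mul_const G)
        have h1 : ‖∫ v in Ioc s t, ((q v - z * r v) * w v - r v * g v) ∂μ‖ ≤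
            ∫ v in Ioc s t, (m v * K + ‖r v‖ * G) ∂μ := by
          apply norm_integral_le_of_norm_le (hint.mono_set hsub)
          filter_upwards [ae_restrict_mem measurableSet_Ioc] with v hv
          have hvI := hIc s hs t ht v ⟨hv.1.le, hv.2⟩
          refine (norm_sub_le _ _).trans ?_
          rw [norm_mul, norm_mul]
          have h3 : ‖q v - z * r v‖ ≤ m v := by
            refine (norm_sub_le _ _).trans ?_
            rw [norm_mul]
          gcongr
          · exact hb1 v hvI
          · exact hg v hvI.1
        refine h1.trans ?_
        refine (setIntegral_mono_set hint (Eventually.of_forall fun v => ?_)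
          hsub.eventuallyLE).trans ?_
        · simp only [hm, Pi.zero_apply]; positivity
        · rw [integral_add (hmi.mul_const K) (hri.mul_const G), integral_mul_const,
            integral_mul_const]
      have E2' : ∀ K, 0 ≤ K → (∀ t ∈ I, ‖w t‖ ≤ K) → ∀ t ∈ I,
          ‖w1 t‖ ≤ C * G + (Q * K + N * G) := by
        intro K hK hb1 t ht
        have h1 : ‖w1 t - w1 y‖ ≤ Q * K + N * G := by
          rcases le_total y t with h | h
          · exact E2 K hK hb1 y hyI t ht h
          · rw [norm_sub_rev]; exact E2 K hK hb1 t ht y hyI h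
        have h2 := norm_add_le (w1 t - w1 y) (w1 y)
        rw [sub_add_cancel] at h2
        linarith
      have hwb : ∀ t ∈ I, ‖w t‖ ≤ 2 * (a * G) := by
        apply aux_sup I (fun t => ‖w t‖) (fun _ => norm_nonneg _)
        · obtain ⟨K, hK⟩ := hb
          exact ⟨K, fun t ht => hK t ht.1⟩
        · intro K hK hb1 t ht
          have hK1 : 0 ≤ C * G + (Q * K + N * G) := by positivity
          have h1 : ‖w t - w y‖ ≤ ε * (C * G + (Q * K + N * G)) := by
            have ht2 : |t - y| ≤ δ := ht.2
            rw [abs_le] at ht2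
            rcases le_total y t with h | h
            · exact E1 _ hK1 (E2' K hK hb1) y hyI t ht h (by linarith)
            · rw [norm_sub_rev]; exact E1 _ hK1 (E2' K hK hb1) t ht y hyI h (by linarith)
          have h2 := norm_add_le (w t - w y) (w y)
          rw [sub_add_cancel] at h2
          have h3 : ε * Q * K ≤ 1 / 2 * K := by gcongr
          simp only [ha]
          nlinarith
      have ha0 : 0 ≤ a := by positivity
      have h1 := hwb x hxI
      have h2 := E2' (2 * (a * G)) (by positivity) hwb x hxI
      have p1 : 0 ≤ (C + Q * (2 * a) + N) * G := by positivity
      have p2 : 0 ≤ a * G := by positivity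
      constructor <;> nlinarith
  obtain ⟨n, hn⟩ := exists_nat_ge ((B - A) / δ)
  obtain ⟨C, hC0, hC⟩ := hind n
  refine ⟨C, hC0, fun w w1 g hsol hb hw hw1 G hG hg x hx => hC w w1 g hsol hb hw hw1 G hG hg x hx ?_⟩
  rw [div_le_iff₀ hδ0] at hn
  rw [abs_le]
  constructor <;> linarith [hx.1, hx.2, hc.1, hc.2]

lemma aux_comb (T : Set ℝ) (μ : Measure ℝ) [IsLocallyFiniteMeasure μ] (p r q : ℝ → ℂ)
    (hφ : LocallyIntegrable (fun t => 1 / extK T p t) volume)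
    (hr : LocallyIntegrable r μ) (hq : LocallyIntegrable q μ)
    (z1 z2 z0 a1 a2 a3 : ℂ) (u u1 : ℂ → ℝ → ℂ)
    (hs : ∀ z, IsSLSol T μ p r q z 0 (u z) (u1 z)) :
    IsSLSol T μ p r q z0 (fun t => a1 * (z1 - z0) * u z1 t + a2 * (z2 - z0) * u z2 t)
      (fun t => a1 * u z1 t + a2 * u z2 t + a3 * u z0 t)
      (fun t => a1 * u1 z1 t + a2 * u1 z2 t + a3 * u1 z0 t) := by
  intro s t hst
  have R := fun z => aux_reg T μ p r q hφ hr hq z (u z) (u1 z) (hs z)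
  have hs' : ∀ z, u z t = u z s + ∫ v in s..t, u1 z v / extK T p v ∧
    u1 z t = u1 z s + ∫ v in Set.Ioc s t, (q v - z * r v) * u z v ∂μ := by
    intro z
    simpa [IsSLSol, IsPair] using hs z s t hst
  have hi : ∀ z, IntegrableOn (fun v => (q v - z * r v) * u z v) (Ioc s t) μ := fun z =>
    ((R z).2.1.integrableOn_isCompact isCompact_Icc).mono_set Ioc_subset_Icc_self
  have hj : ∀ z, IntervalIntegrable (fun t => u1 z t / extK T p t) volume s t := fun z =>
    (R z).1 s t
  constructor
  · have e : (∫ v in s..t, (a1 * u1 z1 v + a2 * u1 z2 v + a3 * u1 z0 v) / extK T p v) =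
      a1 * (∫ v in s..t, u1 z1 v / extK T p v) + a2 * (∫ v in s..t, u1 z2 v / extK T p v) +
      a3 * (∫ v in s..t, u1 z0 v / extK T p v) := by
      rw [← intervalIntegral.integral_const_mul, ← intervalIntegral.integral_const_mul,
        ← intervalIntegral.integral_const_mul, ← intervalIntegral.integral_add
          ((hj z1).const_mul _) ((hj z2).const_mul _), ← intervalIntegral.integral_add
          (((hj z1).const_mul _).add ((hj z2).const_mul _)) ((hj z0).const_mul _)]
      congr 1
      ext v
      ring
    simp only [e]
    rw [(hs' z1).1, (hs' z2).1, (hs' z0).1]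
    ring
  · have e : (∫ v in Ioc s t, ((q v - z0 * r v) * (a1 * u z1 v + a2 * u z2 v + a3 * u z0 v) -
        r v * (a1 * (z1 - z0) * u z1 v + a2 * (z2 - z0) * u z2 v)) ∂μ) =
      a1 * (∫ v in Ioc s t, (q v - z1 * r v) * u z1 v ∂μ) +
      a2 * (∫ v in Ioc s t, (q v - z2 * r v) * u z2 v ∂μ) +
      a3 * (∫ v in Ioc s t, (q v - z0 * r v) * u z0 v ∂μ) := by
      have i12 : IntegrableOn (fun v => a1 * ((q v - z1 * r v) * u z1 v) +
          a2 * ((q v - z2 * r v) * u z2 v)) (Ioc s t) μ :=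
        ((hi z1).const_mul _).add ((hi z2).const_mul _)
      rw [← integral_const_mul, ← integral_const_mul,
        ← integral_const_mul, ← integral_add
          ((hi z1).const_mul _) ((hi z2).const_mul _), ← integral_add
          i12 ((hi z0).const_mul _)]
      congr 1
      ext v
      ring
    simp only [e]
    rw [(hs' z1).2, (hs' z2).2, (hs' z0).2]
    ring

/-- The solutions of `(ℓ - z) u = 0` with fixed initial conditions at `c ∈ 𝕋_κ` depend
analytically (entirely) on the spectral parameter `z ∈ ℂ`. -/
theorem solution_entire_in_spectral_parameter
    (T : Set ℝ) (hne : T.Nonempty) (hcl : IsClosed T)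
    (hfive : ∃ s : Finset ℝ, ↑s ⊆ T ∧ 5 ≤ s.card)
    (μ ν : Measure ℝ)
    (hμ : ∀ c d : ℝ, c ≤ d →
      μ (Set.Ioc c d) = ENNReal.ofReal (tsSigma (tsKappa T) d - tsSigma (tsKappa T) c))
    (hν : ∀ c d : ℝ, c ≤ d → ν (Set.Ico c d) = ENNReal.ofReal (tsRho T d - tsRho T c))
    (p r q : ℝ → ℂ)
    (hr : LocallyIntegrable r μ) (hq : LocallyIntegrable q μ)
    (hp : LocallyIntegrable (fun t => 1 / p t) ν)
    (c : ℝ) (hc : c ∈ tsKappa T) (d₁ d₂ : ℂ) (u u1 : ℂ → ℝ → ℂ)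
    (hsol : ∀ z : ℂ, IsSLSol T μ p r q z 0 (u z) (u1 z) ∧ u z c = d₁ ∧ u1 z c = d₂) :
    ∀ x : ℝ, AnalyticOnNhd ℂ (fun z => u z x) Set.univ ∧
      AnalyticOnNhd ℂ (fun z => u1 z x) Set.univ := by
  have : IsLocallyFiniteMeasure μ :=
    aux_lf' μ (fun c d h => by rw [hμ c d h]; exact ENNReal.ofReal_lt_top)
  have hφ := aux_pbar T hne hcl ν hν p hp
  have hs := fun z => (hsol z).1
  have R := fun z => aux_reg T μ p r q hφ hr hq z (u z) (u1 z) (hs z)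
  intro x
  set A := min c x with hA
  set B := max c x with hB
  have hcI : c ∈ Icc A B := ⟨min_le_left _ _, le_max_left _ _⟩
  have hxI : x ∈ Icc A B := ⟨min_le_right _ _, le_max_right _ _⟩
  have main : ∀ z0, DifferentiableAt ℂ (fun z => u z x) z0 ∧
      DifferentiableAt ℂ (fun z => u1 z x) z0 := by
    intro z0
    obtain ⟨C, hC0, hC⟩ := aux_stab T μ p r q hφ hr hq z0 A B c hcI
    obtain ⟨S, hS⟩ := (R z0).2.2 A B
    have hS0 : 0 ≤ S := (norm_nonneg _).trans (hS c hcI).1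
    have hbd : ∀ z1 z2 a1 a2 a3 : ℂ, ∃ K, ∀ t ∈ Icc A B,
        ‖a1 * u z1 t + a2 * u z2 t + a3 * u z0 t‖ ≤ K := by
      intro z1 z2 a1 a2 a3
      obtain ⟨K1, hK1⟩ := (R z1).2.2 A B
      obtain ⟨K2, hK2⟩ := (R z2).2.2 A B
      refine ⟨‖a1‖ * K1 + ‖a2‖ * K2 + ‖a3‖ * S, fun t ht => ?_⟩
      refine (norm_add₃_le).trans ?_
      rw [norm_mul, norm_mul, norm_mul]
      gcongr
      · exact (hK1 t ht).1
      · exact (hK2 t ht).1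
      · exact (hS t ht).1
    have hclose : ∀ z, C * ‖z - z0‖ ≤ 1 / 2 → ∀ t ∈ Icc A B,
        ‖u z t - u z0 t‖ ≤ 2 * (C * ‖z - z0‖ * S) := by
      intro z hz
      have e := aux_comb T μ p r q hφ hr hq z z z0 1 0 (-1) u u1 hs
      apply aux_sup (Icc A B) (fun t => ‖u z t - u z0 t‖) (fun _ => norm_nonneg _)
      · obtain ⟨K, hK⟩ := hbd z z 1 0 (-1)
        refine ⟨K, fun t ht => ?_⟩
        have := hK t ht
        rwa [show 1 * u z t + 0 * u z t + -1 * u z0 t = u z t - u z0 t by ring] at this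
      · intro K hK hb t ht
        have h1 := (hC _ _ _ e (hbd z z 1 0 (-1)) (by simp [(hsol z).2.1, (hsol z0).2.1])
          (by simp [(hsol z).2.2, (hsol z0).2.2]) (‖z - z0‖ * (S + K)) (by positivity) (by
            intro y hy
            rw [show 1 * (z - z0) * u z y + 0 * (z - z0) * u z y = (z - z0) * u z y by ring,
              norm_mul]
            gcongr
            have h2 := norm_add_le (u z0 y) (u z y - u z0 y)
            rw [add_sub_cancel] at h2
            have := hb y hy
            have := (hS y hy).1
            linarith) t ht).1
        rw [show 1 * u z t + 0 * u z t + -1 * u z0 t = u z t - u z0 t by ring] at h1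
        nlinarith
    have hfin : ∀ z1 z2, z1 ≠ z0 → z2 ≠ z0 → ‖z1 - z0‖ < 1 / (2 * (C + 1)) →
        ‖z2 - z0‖ < 1 / (2 * (C + 1)) →
        ‖(z1 - z0)⁻¹ * (u z1 x - u z0 x) - (z2 - z0)⁻¹ * (u z2 x - u z0 x)‖ ≤
          (C * (2 * C * S)) * (‖z1 - z0‖ + ‖z2 - z0‖) ∧
        ‖(z1 - z0)⁻¹ * (u1 z1 x - u1 z0 x) - (z2 - z0)⁻¹ * (u1 z2 x - u1 z0 x)‖ ≤
          (C * (2 * C * S)) * (‖z1 - z0‖ + ‖z2 - z0‖) := by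
      intro z1 z2 n1 n2 h1 h2
      have hsm : ∀ z : ℂ, ‖z - z0‖ < 1 / (2 * (C + 1)) → C * ‖z - z0‖ ≤ 1 / 2 := by
        intro z hz
        rw [lt_div_iff₀ (by positivity)] at hz
        nlinarith [norm_nonneg (z - z0)]
      have k1 := hclose z1 (hsm z1 h1)
      have k2 := hclose z2 (hsm z2 h2)
      set b1 := (z1 - z0)⁻¹ with hb1
      set b2 := (z2 - z0)⁻¹ with hb2
      have m1 : b1 * (z1 - z0) = 1 := inv_mul_cancel₀ (sub_ne_zero.2 n1)
      have m2 : b2 * (z2 - z0) = 1 := inv_mul_cancel₀ (sub_ne_zero.2 n2)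
      have e := aux_comb T μ p r q hφ hr hq z1 z2 z0 b1 (-b2) (b2 - b1) u u1 hs
      have h3 := hC _ _ _ e (hbd _ _ _ _ _)
        (by simp only [(hsol z1).2.1, (hsol z2).2.1, (hsol z0).2.1]; ring)
        (by simp only [(hsol z1).2.2, (hsol z2).2.2, (hsol z0).2.2]; ring)
        (2 * C * S * (‖z1 - z0‖ + ‖z2 - z0‖)) (by positivity) (by
          intro y hy
          rw [m1, neg_mul, m2, show 1 * u z1 y + -1 * u z2 y =
            (u z1 y - u z0 y) - (u z2 y - u z0 y) by ring]
          refine (norm_sub_le _ _).trans ?_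
          have := k1 y hy
          have := k2 y hy
          linarith) x hxI
      rw [show b1 * u z1 x + -b2 * u z2 x + (b2 - b1) * u z0 x =
        b1 * (u z1 x - u z0 x) - b2 * (u z2 x - u z0 x) by ring,
        show b1 * u1 z1 x + -b2 * u1 z2 x + (b2 - b1) * u1 z0 x =
        b1 * (u1 z1 x - u1 z0 x) - b2 * (u1 z2 x - u1 z0 x) by ring, ← mul_assoc] at h3
      exact h3
    have hρ : 0 < 1 / (2 * (C + 1)) := by positivity
    exact ⟨aux_diff (fun z => u z x) z0 (C * (2 * C * S)) _ (by positivity) hρ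
        fun z1 z2 n1 n2 h1 h2 => (hfin z1 z2 n1 n2 h1 h2).1,
      aux_diff (fun z => u1 z x) z0 (C * (2 * C * S)) _ (by positivity) hρ
        fun z1 z2 n1 n2 h1 h2 => (hfin z1 z2 n1 n2 h1 h2).2⟩
  have D1 : Differentiable ℂ (fun z => u z x) := fun z => (main z).1
  have D2 : Differentiable ℂ (fun z => u1 z x) := fun z => (main z).2
  exact ⟨fun z _ => D1.analyticAt z, fun z _ => D2.analyticAt z⟩
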